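/- Shared right boundary: let x and y be canonical tokens with x ∈ P(y) and x ≠ y (so y is non-atomic), and let r_j be the canonical rule of y. Let s be a string and suppose that for some stage k with j ≤ k ≤ m, the token y occurs in φ_k(s) with right boundary at position p. Then there exists a stage k′ with 0 ≤ k′ ≤ j − 1 such that x occurs in φ_{k′}(s) with right boundary at the same position p. -/

import Mathlib

/-!
Common BPE formalization preamble.

A token is a (nonempty) string over the alphabet `α`, modeled as `List α`.
A merge rule is a pair of tokens; a dictionary is an ordered list of rules
(earlier rules have strictly higher priority).
-/

namespace BPE

variable {α : Type*} [DecidableEq α]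

/-- A token is a string over the alphabet (nonemptiness is imposed by hypotheses). -/
abbrev Token (α : Type*) := List α

/-- A merge rule is an ordered pair of tokens. -/
abbrev Rule (α : Type*) := Token α × Token α

/-- A dictionary is an ordered list of merge rules; earlier = higher priority. -/
abbrev Dict (α : Type*) := List (Rule α)

/-- Apply a single merge rule to a token list, scanning left to right and replacing
each adjacent occurrence of `r.1` followed by `r.2` by the concatenated token,
resuming the scan after the newly formed token (no overlaps). -/
def applyRule (r : Rule α) : List (Token α) → List (Token α)
  | [] => []
  | [t] => [t]
  | t :: u :: rest =>
      if t = r.1 ∧ u = r.2 then (r.1 ++ r.2) :: applyRule r rest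
      else t :: applyRule r (u :: rest)

/-- `φ₀(s)`: the list of single-character tokens of `s`. -/
def phi0 (s : List α) : List (Token α) := s.map (fun c => [c])

/-- `φ_k(s)`: the token list after applying the first `k` rules of `D` to `s`. -/
def phiK (D : Dict α) (k : ℕ) (s : List α) : List (Token α) :=
  (D.take k).foldl (fun φ r => applyRule r φ) (phi0 s)

/-- The BPE tokenization `𝕋_D(s)`. -/
def tokenize (D : Dict α) (s : List α) : List (Token α) :=
  phiK D D.length s

/-- Detokenization `π`: concatenation of the tokens. -/
def detok (φ : List (Token α)) : List α := φ.flatten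

/-- A dictionary is valid if all rule components are genuine (nonempty) tokens. -/
def ValidDict (D : Dict α) : Prop := ∀ r ∈ D, r.1 ≠ [] ∧ r.2 ≠ []

/-- A token `t` is canonical if `𝕋_D(t) = [t]`. -/
def IsCanonical (D : Dict α) (t : Token α) : Prop := tokenize D t = [t]

/-- The last token `θ(s)`: last element of `𝕋_D(s)` (defaulting to `[]`). -/
def theta (D : Dict α) (s : List α) : Token α := (tokenize D s).getLastD []

/-- `j` (0-based) is the index of the canonical rule of `t`:
`φ_j(t)` has exactly two tokens and `φ_{j+1}(t) = [t]`. -/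
def IsCanonicalRuleIdx (D : Dict α) (t : Token α) (j : ℕ) : Prop :=
  j < D.length ∧ (phiK D j t).length = 2 ∧ phiK D (j + 1) t = [t]

open Classical in
/-- The (0-based) index of the canonical rule of `t` (junk value `0` if none exists). -/
noncomputable def canonIdx (D : Dict α) (t : Token α) : ℕ :=
  if h : ∃ j, IsCanonicalRuleIdx D t j then h.choose else 0

/-- Predecessor `pre(t)`: first token of the two-token stage `φ_{j-1}(t)`. -/
noncomputable def pre (D : Dict α) (t : Token α) : Token α :=
  (phiK D (canonIdx D t) t).headD []

/-- Successor `suc(t)`: second token of the two-token stage `φ_{j-1}(t)`. -/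
noncomputable def suc (D : Dict α) (t : Token α) : Token α :=
  (phiK D (canonIdx D t) t).getLastD []

/-- `InPath D x a` means `a ∈ P(x)`: `a` is obtained from `x` by iterating `suc`,
i.e. `a` lies on the ancestor path of `x` in the Successor Forest. -/
def InPath (D : Dict α) (x a : Token α) : Prop :=
  ∃ n : ℕ, (suc D)^[n] x = a

/-- `s` with the suffix `u` removed. -/
def dropSuffix (s u : List α) : List α := s.take (s.length - u.length)

/-- The Prefix Last-Token Condition of the canonical suffix token `t`
with respect to the string `s`. Atomic tokens satisfy it by definition;
a non-atomic token must satisfy Reachability and Priority dominance. -/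
def PLTC (D : Dict α) (s t : Token α) : Prop :=
  t.length = 1 ∨
    (1 < t.length ∧
      InPath D (theta D (dropSuffix s (suc D t))) (pre D t) ∧
      (theta D (dropSuffix s (suc D t)) ≠ pre D t →
        ∀ u : Token α, 1 < u.length → IsCanonical D u → suc D u = pre D t →
          InPath D (theta D (dropSuffix s (suc D t))) u →
          canonIdx D t < canonIdx D u))


/-- `y` occurs in `φ` with right boundary at position `p`:
`φ = a ++ [y] ++ b` with `|π(a)| + |y| = p`. -/
def OccursAt (y : Token α) (φ : List (Token α)) (p : ℕ) : Prop :=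
  ∃ a b : List (Token α), φ = a ++ [y] ++ b ∧ (detok a).length + y.length = p

theorem applyRule_split (r : Rule α) (φ : List (Token α)) : ∀ P Q : List (Token α),
    applyRule r φ = P ++ Q →
    ∃ P' Q', φ = P' ++ Q' ∧ applyRule r P' = P ∧ applyRule r Q' = Q := by
  induction φ using applyRule.induct r with
  | case1 =>
    intro P Q h
    simp only [applyRule] at h
    obtain ⟨rfl, rfl⟩ := List.append_eq_nil_iff.mp h.symm
    exact ⟨[], [], rfl, rfl, rfl⟩
  | case2 t =>
    intro P Q h
    cases P with
    | nil => exact ⟨[], [t], rfl, rfl, by simpa using h⟩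
    | cons a P =>
      simp only [applyRule, List.cons_append, List.cons.injEq] at h
      obtain ⟨rfl, h⟩ := h
      obtain ⟨rfl, rfl⟩ := List.append_eq_nil_iff.mp h.symm
      exact ⟨[t], [], rfl, rfl, rfl⟩
  | case3 t u rest hc ih =>
    intro P Q h
    cases P with
    | nil => exact ⟨[], _, rfl, rfl, by simpa using h⟩
    | cons a P =>
      rw [applyRule, if_pos hc, List.cons_append, List.cons.injEq] at h
      obtain ⟨rfl, h⟩ := h
      obtain ⟨P', Q', rfl, h1, h2⟩ := ih P Q h
      exact ⟨t :: u :: P', Q', rfl, by rw [applyRule, if_pos hc, h1], h2⟩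
  | case4 t u rest hc ih =>
    intro P Q h
    cases P with
    | nil => exact ⟨[], _, rfl, rfl, by simpa using h⟩
    | cons a P =>
      rw [applyRule, if_neg hc, List.cons_append, List.cons.injEq] at h
      obtain ⟨rfl, h⟩ := h
      obtain ⟨P', Q', h0, h1, h2⟩ := ih P Q h
      refine ⟨t :: P', Q', by rw [h0]; rfl, ?_, h2⟩
      cases P' with
      | nil => rw [← h1]; simp [applyRule]
      | cons v P' =>
        simp only [List.cons_append, List.cons.injEq] at h0
        obtain ⟨rfl, _⟩ := h0
        rw [applyRule, if_neg hc, h1]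

theorem applyRule_flatten (r : Rule α) (φ : List (Token α)) :
    (applyRule r φ).flatten = φ.flatten := by
  induction φ using applyRule.induct r with
  | case1 => simp [applyRule]
  | case2 t => simp [applyRule]
  | case3 t u rest hc ih =>
    rw [applyRule, if_pos hc]
    simp [ih, hc.1, hc.2]
  | case4 t u rest hc ih =>
    rw [applyRule, if_neg hc, List.flatten_cons, ih]
    simp

theorem applyRule_length (r : Rule α) (φ : List (Token α)) :
    (applyRule r φ).length ≤ φ.length := by
  induction φ using applyRule.induct r with
  | case1 => simp [applyRule]
  | case2 t => simp [applyRule]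
  | case3 t u rest hc ih =>
    rw [applyRule, if_pos hc]
    simp only [List.length_cons]
    omega
  | case4 t u rest hc ih =>
    rw [applyRule, if_neg hc]
    simp only [List.length_cons] at ih ⊢
    omega

theorem phiK_succ (D : Dict α) (k : ℕ) :
    (∃ r, ∀ s, phiK D (k + 1) s = applyRule r (phiK D k s)) ∨
      (∀ s, phiK D (k + 1) s = phiK D k s) := by
  by_cases h : k < D.length
  · left
    refine ⟨D[k], fun s => ?_⟩
    unfold phiK
    rw [List.take_succ_eq_append_getElem h, List.foldl_append]
    rfl
  · right
    intro s
    unfold phiK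
    rw [List.take_of_length_le (by omega), List.take_of_length_le (by omega)]

theorem phiK_zero (D : Dict α) (s : List α) : phiK D 0 s = s.map (fun c => [c]) := by
  simp [phiK, phi0]

theorem phiK_flatten (D : Dict α) (k : ℕ) (s : List α) : (phiK D k s).flatten = s := by
  induction k with
  | zero =>
    rw [phiK_zero]
    induction s with
    | nil => rfl
    | cons a s ih => simp [ih]
  | succ k ih =>
    rcases phiK_succ D k with ⟨r, h⟩ | h
    · rw [h, applyRule_flatten, ih]
    · rw [h, ih]

theorem phiK_length_anti (D : Dict α) (s : List α) {i k : ℕ} (hik : i ≤ k) :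
    (phiK D k s).length ≤ (phiK D i s).length := by
  induction k, hik using Nat.le_induction with
  | base => exact le_rfl
  | succ k _ ih =>
    rcases phiK_succ D k with ⟨r, h⟩ | h
    · rw [h]; exact (applyRule_length _ _).trans ih
    · rw [h]; exact ih

theorem phiK_split (D : Dict α) (s : List α) (k : ℕ) : ∀ P Q : List (Token α),
    phiK D k s = P ++ Q →
    ∃ s1 s2, s = s1 ++ s2 ∧ phiK D k s1 = P ∧ phiK D k s2 = Q ∧
      ∀ i ≤ k, phiK D i s = phiK D i s1 ++ phiK D i s2 := by
  induction k with
  | zero =>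
    intro P Q h
    rw [phiK_zero] at h
    obtain ⟨s1, s2, rfl, rfl, rfl⟩ := List.map_eq_append_iff.mp h
    refine ⟨s1, s2, rfl, phiK_zero _ _, phiK_zero _ _, ?_⟩
    intro i hi
    obtain rfl : i = 0 := by omega
    simp [phiK_zero]
  | succ k ih =>
    intro P Q h
    rcases phiK_succ D k with ⟨r, hr⟩ | hr
    · rw [hr] at h
      obtain ⟨P', Q', h0, h1, h2⟩ := applyRule_split r _ P Q h
      obtain ⟨s1, s2, e, e1, e2, e3⟩ := ih P' Q' h0
      refine ⟨s1, s2, e, by rw [hr, e1, h1], by rw [hr, e2, h2], ?_⟩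
      intro i hi
      rcases Nat.lt_or_ge k i with hlt | hge
      · obtain rfl : i = k + 1 := by omega
        rw [hr, hr, hr, h, e1, e2, h1, h2]
      · exact e3 i hge
    · rw [hr] at h
      obtain ⟨s1, s2, e, e1, e2, e3⟩ := ih P Q h
      refine ⟨s1, s2, e, by rw [hr, e1], by rw [hr, e2], ?_⟩
      intro i hi
      rcases Nat.lt_or_ge k i with hlt | hge
      · obtain rfl : i = k + 1 := by omega
        rw [hr, hr, hr, h, e1, e2]
      · exact e3 i hge

/-- Restriction: a token occurring at stage `k` evolves autonomously at all earlier stages. -/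
theorem restrict (D : Dict α) (s : List α) (k : ℕ) (t : Token α) (p : ℕ)
    (h : OccursAt t (phiK D k s) p) :
    phiK D k t = [t] ∧ ∀ i ≤ k, ∃ A B, phiK D i s = A ++ phiK D i t ++ B ∧
      (detok A).length + t.length = p := by
  obtain ⟨a, b, hab, hp⟩ := h
  obtain ⟨s1, s2, rfl, h1, h2, h3⟩ := phiK_split D s k _ _ hab
  obtain ⟨s3, s4, rfl, h4, h5, h6⟩ := phiK_split D s1 k _ _ h1
  have e : s4 = t := by
    have := phiK_flatten D k s4
    rw [h5] at this
    simpa using this.symm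
  subst e
  refine ⟨h5, fun i hi => ⟨phiK D i s3, phiK D i s2, by rw [h3 i hi, h6 i hi], ?_⟩⟩
  rw [← hp, ← h4]
  simp only [detok, phiK_flatten]

theorem occurs_last (D : Dict α) (s : List α) (k : ℕ) (t : Token α) (p : ℕ)
    (h : OccursAt t (phiK D k s) p) (ht : t ≠ []) (i : ℕ) (hi : i ≤ k) :
    OccursAt ((phiK D i t).getLastD []) (phiK D i s) p := by
  obtain ⟨A, B, hAB, hp⟩ := (restrict D s k t p h).2 i hi
  have hf := phiK_flatten D i t
  rcases List.eq_nil_or_concat (phiK D i t) with h0 | ⟨L, b, h0⟩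
  · rw [h0] at hf
    exact absurd hf.symm ht
  · rw [h0] at hf hAB ⊢
    refine ⟨A ++ L, B, by rw [hAB]; simp, ?_⟩
    rw [← hp, ← hf]
    simp [detok]
    omega

theorem suc_occurs (D : Dict α) (s : List α) (k : ℕ) (t : Token α) (p : ℕ)
    (h : OccursAt t (phiK D k s) p) : ∃ k' ≤ k, OccursAt (suc D t) (phiK D k' s) p := by
  by_cases ht : t = []
  · subst ht
    refine ⟨k, le_rfl, ?_⟩
    have e : suc D ([] : Token α) = [] := by
      unfold suc
      have := phiK_length_anti D [] (Nat.zero_le (canonIdx D ([] : Token α)))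
      rw [phiK_zero] at this
      have h0 : phiK D (canonIdx D ([] : Token α)) [] = [] := by
        apply List.eq_nil_of_length_eq_zero
        simpa using this
      rw [h0]; rfl
    rw [e]; exact h
  · have hc : canonIdx D t ≤ k := by
      unfold canonIdx
      split_ifs with hex
      · by_contra hlt
        have h2 := hex.choose_spec.2.1
        have := phiK_length_anti D t (le_of_lt (not_le.mp hlt))
        rw [h2, (restrict D s k t p h).1] at this
        simp at this
      · exact Nat.zero_le _
    exact ⟨canonIdx D t, hc, occurs_last D s k t p h ht _ hc⟩

theorem canonIdx_unique (D : Dict α) (t : Token α) (i j : ℕ)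
    (hi : IsCanonicalRuleIdx D t i) (hj : IsCanonicalRuleIdx D t j) : i ≤ j := by
  by_contra hlt
  have := phiK_length_anti D t (show j + 1 ≤ i by omega)
  rw [hi.2.1, hj.2.2] at this
  simp at this

theorem canonIdx_eq (D : Dict α) (t : Token α) (j : ℕ)
    (hj : IsCanonicalRuleIdx D t j) : canonIdx D t = j := by
  have hex : ∃ j, IsCanonicalRuleIdx D t j := ⟨j, hj⟩
  unfold canonIdx
  rw [dif_pos hex]
  exact le_antisymm (canonIdx_unique D t _ _ hex.choose_spec hj)
    (canonIdx_unique D t _ _ hj hex.choose_spec)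

theorem iterate_occurs (D : Dict α) (s : List α) (p n : ℕ) : ∀ (t : Token α) (k : ℕ),
    OccursAt t (phiK D k s) p → ∃ k' ≤ k, OccursAt ((suc D)^[n] t) (phiK D k' s) p := by
  induction n with
  | zero => intro t k h; exact ⟨k, le_rfl, h⟩
  | succ n ih =>
    intro t k h
    obtain ⟨k1, hk1, h1⟩ := suc_occurs D s k t p h
    obtain ⟨k2, hk2, h2⟩ := ih _ k1 h1
    exact ⟨k2, hk2.trans hk1, by rwa [Function.iterate_succ_apply]⟩

/-- **Shared right boundary.** Let `x`, `y` be canonical with `x ∈ P(y)`, `x ≠ y`,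
and let `j` (0-based) index the canonical rule of `y`. If `y` occurs in `φ_k(s)`
with right boundary at `p` for some stage `k` at or after the canonical rule of `y`,
then `x` occurs at some strictly earlier stage `k' ≤ j` with the same right boundary. -/
theorem shared_right_boundary [Fintype α] (D : Dict α) (hD : ValidDict D)
    (x y : Token α) (hx : IsCanonical D x) (hy : IsCanonical D y)
    (hpath : InPath D y x) (hne : x ≠ y)
    (j : ℕ) (hj : IsCanonicalRuleIdx D y j)
    (s : List α) (k : ℕ) (hk1 : j + 1 ≤ k) (hk2 : k ≤ D.length)
    (p : ℕ) (hocc : OccursAt y (phiK D k s) p) :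
    ∃ k' ≤ j, OccursAt x (phiK D k' s) p := by
  obtain ⟨n, hn⟩ := hpath
  cases n with
  | zero => exact absurd hn.symm hne
  | succ n =>
    have hy0 : y ≠ [] := by
      rintro rfl
      have := phiK_length_anti D ([] : List α) (Nat.zero_le j)
      rw [hj.2.1, phiK_zero] at this
      simp at this
    have h1 := occurs_last D s k y p hocc hy0 j (by omega)
    have e : suc D y = (phiK D j y).getLastD [] := by
      rw [suc, canonIdx_eq D y j hj]
    rw [← e] at h1
    obtain ⟨k', hk', h2⟩ := iterate_occurs D s p n _ j h1
    refine ⟨k', hk', ?_⟩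
    rw [← hn, Function.iterate_succ_apply]
    exact h2

end BPE
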